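/- arXiv:2401.07843 — 2 statements merged into one kernel-verified Lean document; each statement's English description precedes it below -/
import Mathlib

section
/- Let X = (P₁,P₂,P₃) and Y = (Q₁,Q₂,Q₃) be vector fields on 𝕋² with all components of degree at most 2. Then there exists A ∈ ℝ[x,y,z] with deg A ≤ 2 such that the Lie bracket satisfies [X,Y] = (A·y, −A·x, 0). Consequently [X,Y](x²+y²) = 0 and [X,Y](z) = 0, so x²+y² and z are two functionally independent first integrals of [X,Y], which is therefore completely integrable. -/
open MvPolynomial

/-- Derivative of `g` along the polynomial vector field `(P, Q, R)` in `ℝ[x,y,z]`. -/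
noncomputable def vf (P Q R g : MvPolynomial (Fin 3) ℝ) : MvPolynomial (Fin 3) ℝ :=
  P * pderiv 0 g + Q * pderiv 1 g + R * pderiv 2 g

/-- The defining polynomial `F = (x²+y²-a²)² + z² - 1` of the torus `𝕋²`. -/
noncomputable def torusF (a : ℝ) : MvPolynomial (Fin 3) ℝ :=
  (X 0 ^ 2 + X 1 ^ 2 - C (a ^ 2)) ^ 2 + X 2 ^ 2 - 1

/-- `(P, Q, R)` is a polynomial vector field on the torus `𝕋²`. -/
def IsVFOnTorus (a : ℝ) (P Q R : MvPolynomial (Fin 3) ℝ) : Prop :=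
  ∃ K : MvPolynomial (Fin 3) ℝ, vf P Q R (torusF a) = K * torusF a

lemma tdAdd {p q : MvPolynomial (Fin 3) ℝ} {n : ℕ} (hp : p.totalDegree ≤ n)
    (hq : q.totalDegree ≤ n) : (p + q).totalDegree ≤ n :=
  (totalDegree_add _ _).trans (max_le hp hq)

lemma tdSub {p q : MvPolynomial (Fin 3) ℝ} {n : ℕ} (hp : p.totalDegree ≤ n)
    (hq : q.totalDegree ≤ n) : (p - q).totalDegree ≤ n :=
  (totalDegree_sub _ _).trans (max_le hp hq)

lemma tdMul {p q : MvPolynomial (Fin 3) ℝ} (m k : ℕ) {n : ℕ} (hp : p.totalDegree ≤ m)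
    (hq : q.totalDegree ≤ k) (h : m + k ≤ n) : (p * q).totalDegree ≤ n :=
  (totalDegree_mul _ _).trans ((add_le_add hp hq).trans h)

lemma tdC (c : ℝ) (n : ℕ) : (C c : MvPolynomial (Fin 3) ℝ).totalDegree ≤ n := by simp

lemma tdX (i : Fin 3) {n : ℕ} (h : 1 ≤ n) :
    (X i : MvPolynomial (Fin 3) ℝ).totalDegree ≤ n := by simpa using h

lemma tdXsq (i : Fin 3) {n : ℕ} (h : 2 ≤ n) :
    (X i ^ 2 : MvPolynomial (Fin 3) ℝ).totalDegree ≤ n := by simpa using h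

lemma tdOne (n : ℕ) : (1 : MvPolynomial (Fin 3) ℝ).totalDegree ≤ n := by simp

lemma linForm (p : MvPolynomial (Fin 3) ℝ) (hp : p.totalDegree ≤ 1) :
    ∃ c0 c1 c2 c3 : ℝ, p = C c0 + C c1 * X 0 + C c2 * X 1 + C c3 * X 2 := by
  refine ⟨coeff 0 p, coeff (Finsupp.single 0 1) p, coeff (Finsupp.single 1 1) p,
    coeff (Finsupp.single 2 1) p, ?_⟩
  ext m
  simp only [coeff_add, coeff_C, coeff_C_mul, coeff_X]
  by_cases hm : m.degree ≤ 1
  · rcases Nat.le_one_iff_eq_zero_or_eq_one.mp hm with h | h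
    · have : m = 0 := by simpa [Finsupp.degree_eq_zero_iff] using h
      subst this
      simp
    · have hr : m ∈ Set.range (fun i : Fin 3 => (Finsupp.single i 1 : Fin 3 →₀ ℕ)) := by
        rw [Finsupp.range_single_one]; exact h
      obtain ⟨i, rfl⟩ := hr
      fin_cases i <;> simp [Finsupp.single_left_inj, eq_comm (a := (0 : Fin 3 →₀ ℕ))] 
  · have h0 : coeff m p = 0 := by
      by_contra h
      have := le_totalDegree (mem_support_iff.2 h)
      rw [Finsupp.degree] at hm
      exact hm (this.trans hp)
    have e0 : (0 : Fin 3 →₀ ℕ) ≠ m := by rintro rfl; simp at hm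
    have e1 : ∀ i, (Finsupp.single i 1 : Fin 3 →₀ ℕ) ≠ m := by rintro i rfl; simp at hm
    simp [h0, e0, e1]

lemma td_s (c : ℝ) :
    (X 0 ^ 2 + X 1 ^ 2 - C c : MvPolynomial (Fin 3) ℝ).totalDegree = 2 := by
  apply le_antisymm
  · exact tdSub (tdAdd (tdXsq _ le_rfl) (tdXsq _ le_rfl)) (tdC _ _)
  · have h : coeff (Finsupp.single 0 2) (X 0 ^ 2 + X 1 ^ 2 - C c : MvPolynomial (Fin 3) ℝ) ≠ 0 := by
      simp [coeff_X_pow, coeff_C, Finsupp.single_left_inj, eq_comm (a := (0 : Fin 3 →₀ ℕ))]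
    have := le_totalDegree (mem_support_iff.2 h)
    simpa using this

lemma td_F (a : ℝ) : (torusF a).totalDegree = 4 := by
  have hs := td_s (a ^ 2)
  have hs0 : (X 0 ^ 2 + X 1 ^ 2 - C (a ^ 2) : MvPolynomial (Fin 3) ℝ) ≠ 0 := by
    intro h; rw [h] at hs; simp at hs
  have h4 : ((X 0 ^ 2 + X 1 ^ 2 - C (a ^ 2)) ^ 2 : MvPolynomial (Fin 3) ℝ).totalDegree = 4 := by
    rw [pow_two, totalDegree_mul_of_isDomain hs0 hs0, hs]
  have h2 : (X 2 ^ 2 - 1 : MvPolynomial (Fin 3) ℝ).totalDegree ≤ 2 :=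
    tdSub (tdXsq _ le_rfl) (tdOne _)
  unfold torusF
  rw [add_sub_assoc, totalDegree_add_eq_left_of_totalDegree_lt (by omega), h4]

lemma td_left {p q : MvPolynomial (Fin 3) ℝ} {m n : ℕ} (hq : q.totalDegree = m) (hm : 0 < m)
    (h : (p * q).totalDegree ≤ n + m) : p.totalDegree ≤ n := by
  by_cases hp : p = 0
  · simp [hp]
  have hq0 : q ≠ 0 := by rintro rfl; simp at hq; omega
  rw [totalDegree_mul_of_isDomain hp hq0] at h
  omega

lemma structureVF (a : ℝ) (P Q R : MvPolynomial (Fin 3) ℝ)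
    (hP : P.totalDegree ≤ 2) (hQ : Q.totalDegree ≤ 2) (hR : R.totalDegree ≤ 2)
    (h : IsVFOnTorus a P Q R) :
    ∃ k b0 b1 b2 b3 : ℝ,
      P = C k * X 2 * X 0 + X 1 * (C b0 + C b1 * X 0 + C b2 * X 1 + C b3 * X 2) ∧
      Q = C k * X 2 * X 1 - X 0 * (C b0 + C b1 * X 0 + C b2 * X 1 + C b3 * X 2) ∧
      R = C (2 * k) * (X 2 ^ 2 - 1 - C (a ^ 2) * (X 0 ^ 2 + X 1 ^ 2 - C (a ^ 2))) := by
  obtain ⟨K, hK⟩ := h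
  have hs := td_s (a ^ 2)
  have e4 : (C 4 : MvPolynomial (Fin 3) ℝ) = 4 := map_ofNat C 4
  have e2 : (C 2 : MvPolynomial (Fin 3) ℝ) = 2 := map_ofNat C 2
  have hvf : vf P Q R (torusF a) = C 4 * (X 0 ^ 2 + X 1 ^ 2 - C (a ^ 2)) * (X 0 * P + X 1 * Q)
      + C 2 * X 2 * R := by
    simp [vf, torusF, Derivation.leibniz_pow, e4, e2]
    ring
  have hKd : K.totalDegree ≤ 1 := by
    apply td_left (td_F a) (by norm_num)
    rw [← hK, hvf]
    refine tdAdd (tdMul 2 3 (tdMul 0 2 (tdC _ _) hs.le le_rfl) (tdAdd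
      (tdMul 1 2 (tdX _ le_rfl) hP le_rfl) (tdMul 1 2 (tdX _ le_rfl) hQ le_rfl)) le_rfl) ?_
    exact tdMul 1 2 (tdMul 0 1 (tdC _ _) (tdX _ le_rfl) le_rfl) hR (by norm_num)
  rw [hvf] at hK
  obtain ⟨M, hM⟩ : ∃ M, M = C 4 * (X 0 * P + X 1 * Q) - K * (X 0 ^ 2 + X 1 ^ 2 - C (a ^ 2)) :=
    ⟨_, rfl⟩
  have hMs : M * (X 0 ^ 2 + X 1 ^ 2 - C (a ^ 2)) = K * (X 2 ^ 2 - 1) - C 2 * X 2 * R := by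
    rw [hM]; unfold torusF at hK; linear_combination hK
  have hMd : M.totalDegree ≤ 1 := by
    apply td_left hs (by norm_num)
    rw [hMs]
    exact tdSub (tdMul 1 2 hKd (tdSub (tdXsq _ le_rfl) (tdOne _)) le_rfl)
      (tdMul 1 2 (tdMul 0 1 (tdC _ _) (tdX _ le_rfl) le_rfl) hR le_rfl)
  obtain ⟨c0, c1, c2, k, hKf⟩ := linForm K hKd
  obtain ⟨m0, m1, m2, m, hMf⟩ := linForm M hMd
  have ev : ∀ x y : ℝ, (m0 + m1 * x + m2 * y) * (x ^ 2 + y ^ 2 - a ^ 2)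
      = -(c0 + c1 * x + c2 * y) := by
    intro x y
    have := congrArg (eval ![x, y, 0]) hMs
    rw [hKf, hMf] at this
    simp at this
    linarith
  have v0 := ev 0 0
  have v1 := ev 1 0
  have v2 := ev (-1) 0
  have v3 := ev 2 0
  have v4 := ev (-2) 0
  have w1 := ev 0 1
  have w2 := ev 0 (-1)
  have w3 := ev 0 2
  have w4 := ev 0 (-2)
  have hm0 : m0 = 0 := by linarith
  have hm1 : m1 = 0 := by linarith
  have hm2 : m2 = 0 := by linarith
  subst hm0 hm1 hm2
  have hc0 : c0 = 0 := by linarith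
  have hc1 : c1 = 0 := by linarith
  have hc2 : c2 = 0 := by linarith
  subst hc0 hc1 hc2
  simp only [map_zero, zero_mul, zero_add] at hKf hMf
  have hmk : m = k * a ^ 2 := by
    have := congrArg (eval ![0, 0, 1]) hM
    rw [hKf, hMf] at this
    simp at this
    linarith
  rw [hKf, hMf] at hM hMs
  subst hmk
  have hx2 : (X 2 : MvPolynomial (Fin 3) ℝ) ≠ 0 := X_ne_zero _
  have hx0 : (X 0 : MvPolynomial (Fin 3) ℝ) ≠ 0 := X_ne_zero _
  have hx1 : (X 1 : MvPolynomial (Fin 3) ℝ) ≠ 0 := X_ne_zero _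
  have hRe : C 2 * R = C k * (X 2 ^ 2 - 1) - C (k * a ^ 2) * (X 0 ^ 2 + X 1 ^ 2 - C (a ^ 2)) := by
    apply mul_left_cancel₀ hx2
    linear_combination hMs
  have hk4 : (C k : MvPolynomial (Fin 3) ℝ) = C 4 * C (k / 4) := by
    rw [← C_mul]; congr 1; ring
  have h4 : (C 4 : MvPolynomial (Fin 3) ℝ) ≠ 0 := by simp
  have h2 : (C 2 : MvPolynomial (Fin 3) ℝ) ≠ 0 := by simp
  rw [C_mul, hk4] at hM hRe
  have hxy : X 0 * (P - C (k / 4) * X 2 * X 0) = - (X 1 * (Q - C (k / 4) * X 2 * X 1)) := by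
    apply mul_left_cancel₀ h4
    linear_combination -hM
  have hdvd : (X 1 : MvPolynomial (Fin 3) ℝ) ∣ P - C (k / 4) * X 2 * X 0 := by
    have hp : Prime (X 1 : MvPolynomial (Fin 3) ℝ) := X_prime
    have h01 : (X 1 : MvPolynomial (Fin 3) ℝ) ∣ X 0 * (P - C (k / 4) * X 2 * X 0) :=
      ⟨-(Q - C (k / 4) * X 2 * X 1), by rw [hxy]; ring⟩
    refine (hp.dvd_or_dvd h01).resolve_left ?_
    rintro ⟨q, hq⟩
    have := congrArg (eval ![1, 0, 0]) hq
    simp at this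
  obtain ⟨B, hB⟩ := hdvd
  have hQB : Q - C (k / 4) * X 2 * X 1 = - (X 0 * B) := by
    apply mul_left_cancel₀ hx1
    rw [hB] at hxy
    linear_combination hxy
  have hBd : B.totalDegree ≤ 1 := by
    apply td_left (totalDegree_X (1 : Fin 3)) (by norm_num)
    rw [mul_comm, ← hB]
    exact tdSub hP (tdMul 1 1 (tdMul 0 1 (tdC _ _) (tdX _ le_rfl) le_rfl) (tdX _ le_rfl) le_rfl)
  obtain ⟨b0, b1, b2, b3, hBf⟩ := linForm B hBd
  refine ⟨k / 4, b0, b1, b2, b3, ?_, ?_, ?_⟩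
  · rw [← hBf]; linear_combination hB
  · rw [← hBf]; linear_combination hQB
  · apply mul_left_cancel₀ h2
    rw [hRe, C_mul, e4, e2]
    ring

theorem stmt_2 (a : ℝ) (ha : 1 < a) (P₁ P₂ P₃ Q₁ Q₂ Q₃ : MvPolynomial (Fin 3) ℝ)
    (hP₁ : P₁.totalDegree ≤ 2) (hP₂ : P₂.totalDegree ≤ 2) (hP₃ : P₃.totalDegree ≤ 2)
    (hQ₁ : Q₁.totalDegree ≤ 2) (hQ₂ : Q₂.totalDegree ≤ 2) (hQ₃ : Q₃.totalDegree ≤ 2)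
    (hX : IsVFOnTorus a P₁ P₂ P₃) (hY : IsVFOnTorus a Q₁ Q₂ Q₃) :
    ∃ A : MvPolynomial (Fin 3) ℝ, A.totalDegree ≤ 2 ∧
      vf P₁ P₂ P₃ Q₁ - vf Q₁ Q₂ Q₃ P₁ = A * X 1 ∧
      vf P₁ P₂ P₃ Q₂ - vf Q₁ Q₂ Q₃ P₂ = -(A * X 0) ∧
      vf P₁ P₂ P₃ Q₃ - vf Q₁ Q₂ Q₃ P₃ = 0 ∧
      vf (vf P₁ P₂ P₃ Q₁ - vf Q₁ Q₂ Q₃ P₁) (vf P₁ P₂ P₃ Q₂ - vf Q₁ Q₂ Q₃ P₂)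
        (vf P₁ P₂ P₃ Q₃ - vf Q₁ Q₂ Q₃ P₃) (X 0 ^ 2 + X 1 ^ 2) = 0 ∧
      vf (vf P₁ P₂ P₃ Q₁ - vf Q₁ Q₂ Q₃ P₁) (vf P₁ P₂ P₃ Q₂ - vf Q₁ Q₂ Q₃ P₂)
        (vf P₁ P₂ P₃ Q₃ - vf Q₁ Q₂ Q₃ P₃) (X 2) = 0 := by
  obtain ⟨k, b0, b1, b2, b3, rfl, rfl, rfl⟩ := structureVF a P₁ P₂ P₃ hP₁ hP₂ hP₃ hX
  obtain ⟨l, d0, d1, d2, d3, rfl, rfl, rfl⟩ := structureVF a Q₁ Q₂ Q₃ hQ₁ hQ₂ hQ₃ hY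
  clear hP₁ hP₂ hP₃ hQ₁ hQ₂ hQ₃ hX hY
  have key : ∀ U V W A : MvPolynomial (Fin 3) ℝ, A.totalDegree ≤ 2 → U = A * X 1 →
      V = -(A * X 0) → W = 0 → ∃ A : MvPolynomial (Fin 3) ℝ, A.totalDegree ≤ 2 ∧
      U = A * X 1 ∧ V = -(A * X 0) ∧ W = 0 ∧ vf U V W (X 0 ^ 2 + X 1 ^ 2) = 0 ∧
      vf U V W (X 2) = 0 := by
    rintro U V W A hA rfl rfl rfl
    refine ⟨A, hA, rfl, rfl, rfl, ?_, ?_⟩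
    · simp [vf, Derivation.leibniz_pow]
      ring
    · simp [vf]
  have hE : ∀ e1 e2 e3 : ℝ, (X 2 * X 0 * C e1 + X 2 * X 1 * C e2
      + C 2 * (X 2 ^ 2 - 1 - C (a ^ 2) * (X 0 ^ 2 + X 1 ^ 2 - C (a ^ 2))) * C e3 :
        MvPolynomial (Fin 3) ℝ).totalDegree ≤ 2 := by
    intro e1 e2 e3
    have hx : ∀ i : Fin 3, ∀ e : ℝ, (X 2 * X i * C e : MvPolynomial (Fin 3) ℝ).totalDegree ≤ 2 :=
      fun i e => tdMul 2 0 (tdMul 1 1 (tdX _ le_rfl) (tdX _ le_rfl) le_rfl) (tdC _ _) le_rfl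
    refine tdAdd (tdAdd (hx _ _) (hx _ _)) (tdMul 2 0 (tdMul 0 2 (tdC _ _) ?_ le_rfl)
      (tdC _ _) le_rfl)
    exact tdSub (tdSub (tdXsq _ le_rfl) (tdOne _)) (tdMul 0 2 (tdC _ _) (td_s _).le le_rfl)
  have hL : ∀ e0 e1 e2 e3 : ℝ, (C e0 + C e1 * X 0 + C e2 * X 1 + C e3 * X 2 :
        MvPolynomial (Fin 3) ℝ).totalDegree ≤ 1 := by
    intro e0 e1 e2 e3
    have hx : ∀ i : Fin 3, ∀ e : ℝ, (C e * X i : MvPolynomial (Fin 3) ℝ).totalDegree ≤ 1 :=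
      fun i e => tdMul 0 1 (tdC _ _) (tdX _ le_rfl) le_rfl
    exact tdAdd (tdAdd (tdAdd (tdC _ _) (hx _ _)) (hx _ _)) (hx _ _)
  have hT : ∀ e1 e2 : ℝ, (X 1 * C e1 - X 0 * C e2 : MvPolynomial (Fin 3) ℝ).totalDegree ≤ 1 :=
    fun e1 e2 => tdSub (tdMul 1 0 (tdX _ le_rfl) (tdC _ _) le_rfl)
      (tdMul 1 0 (tdX _ le_rfl) (tdC _ _) le_rfl)
  have e2 : (C 2 : MvPolynomial (Fin 3) ℝ) = 2 := map_ofNat C 2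
  have dtwo : ∀ i : Fin 3, pderiv i (2 : MvPolynomial (Fin 3) ℝ) = 0 := by
    intro i; rw [← e2, pderiv_C]
  apply key _ _ _
    ((C k * (X 2 * X 0 * C d1 + X 2 * X 1 * C d2
      + C 2 * (X 2 ^ 2 - 1 - C (a ^ 2) * (X 0 ^ 2 + X 1 ^ 2 - C (a ^ 2))) * C d3)
    - C l * (X 2 * X 0 * C b1 + X 2 * X 1 * C b2
      + C 2 * (X 2 ^ 2 - 1 - C (a ^ 2) * (X 0 ^ 2 + X 1 ^ 2 - C (a ^ 2))) * C b3))
    + ((C b0 + C b1 * X 0 + C b2 * X 1 + C b3 * X 2) * (X 1 * C d1 - X 0 * C d2)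
      - (C d0 + C d1 * X 0 + C d2 * X 1 + C d3 * X 2) * (X 1 * C b1 - X 0 * C b2)))
  · exact tdAdd (tdSub (tdMul 0 2 (tdC _ _) (hE _ _ _) le_rfl)
      (tdMul 0 2 (tdC _ _) (hE _ _ _) le_rfl))
      (tdSub (tdMul 1 1 (hL _ _ _ _) (hT _ _) le_rfl) (tdMul 1 1 (hL _ _ _ _) (hT _ _) le_rfl))
  all_goals
    simp [vf, Derivation.leibniz_pow, e2, dtwo]
    try ring
end

section
/- Let χ = (P,Q,R) be a Kolmogorov vector field with deg P, deg Q, deg R ≤ 3. Then χ is a vector field on 𝕋² if and only if there exist c₁, c₂ ∈ ℝ such that P = (1/4)c₂z²x + c₁xy², Q = (1/4)c₂z²y − c₁x²y, and R = (c₂/2)z(−a²(x²+y²)+z²+a⁴−1). Moreover, in this case χ(F) = c₂z²·F, i.e., K = c₂z² is the cofactor of χ for 𝕋². -/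
open MvPolynomial

/-- explicit quadratic form -/
def quad (c : Fin 10 → ℝ) (x y z : ℝ) : ℝ :=
  c 0 + c 1 * x + c 2 * y + c 3 * z + c 4 * x ^ 2 + c 5 * (x * y) + c 6 * y ^ 2
    + c 7 * (x * z) + c 8 * (y * z) + c 9 * z ^ 2

lemma exists_quad (p : MvPolynomial (Fin 3) ℝ) (hp : p.totalDegree ≤ 2) :
    ∃ c : Fin 10 → ℝ, ∀ x y z : ℝ, eval ![x, y, z] p = quad c x y z := by
  have key : ∀ S : Finset (Fin 3 →₀ ℕ), S ⊆ p.support → ∃ c : Fin 10 → ℝ, ∀ x y z : ℝ,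
      ∑ d ∈ S, p.coeff d * ∏ i, (![x, y, z] : Fin 3 → ℝ) i ^ d i = quad c x y z := by
    intro S
    induction S using Finset.induction_on with
    | empty => intro _; exact ⟨0, by simp [quad]⟩
    | insert d S hd ih =>
      intro hS
      obtain ⟨c, hc⟩ := ih (fun e he => hS (Finset.mem_insert_of_mem he))
      have hm : ∃ c' : Fin 10 → ℝ, ∀ x y z : ℝ,
          p.coeff d * ∏ i, (![x, y, z] : Fin 3 → ℝ) i ^ d i = quad c' x y z := by
        have h1 : d.sum (fun _ e => e) ≤ 2 :=
          (le_totalDegree (hS (Finset.mem_insert_self d S))).trans hp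
        rw [Finsupp.sum_fintype _ _ (fun _ => rfl), Fin.sum_univ_three] at h1
        simp only [Fin.prod_univ_three]
        generalize p.coeff d = k
        generalize d 0 = i at *
        generalize d 1 = j at *
        generalize d 2 = l at *
        have hi : i ≤ 2 := by omega
        have hj : j ≤ 2 := by omega
        have hl : l ≤ 2 := by omega
        interval_cases i <;> interval_cases j <;> interval_cases l <;> first
          | (exfalso; omega)
          | (refine ⟨Pi.single 0 k, ?_⟩; intro x y z; simp [quad, Pi.single_apply]; done)
          | (refine ⟨Pi.single 1 k, ?_⟩; intro x y z; simp [quad, Pi.single_apply]; done)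
          | (refine ⟨Pi.single 2 k, ?_⟩; intro x y z; simp [quad, Pi.single_apply]; done)
          | (refine ⟨Pi.single 3 k, ?_⟩; intro x y z; simp [quad, Pi.single_apply]; done)
          | (refine ⟨Pi.single 4 k, ?_⟩; intro x y z; simp [quad, Pi.single_apply]; done)
          | (refine ⟨Pi.single 5 k, ?_⟩; intro x y z; simp [quad, Pi.single_apply]; done)
          | (refine ⟨Pi.single 6 k, ?_⟩; intro x y z; simp [quad, Pi.single_apply]; done)
          | (refine ⟨Pi.single 7 k, ?_⟩; intro x y z; simp [quad, Pi.single_apply]; done)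
          | (refine ⟨Pi.single 8 k, ?_⟩; intro x y z; simp [quad, Pi.single_apply]; done)
          | (refine ⟨Pi.single 9 k, ?_⟩; intro x y z; simp [quad, Pi.single_apply]; done)
      obtain ⟨c', hc'⟩ := hm
      refine ⟨c' + c, fun x y z => ?_⟩
      rw [Finset.sum_insert hd, hc, hc']
      simp only [quad, Pi.add_apply]
      ring
  obtain ⟨c, hc⟩ := key p.support (Finset.Subset.refl _)
  exact ⟨c, fun x y z => by rw [eval_eq', hc]⟩

lemma quot_deg (i : Fin 3) (p : MvPolynomial (Fin 3) ℝ) (h : (X i * p).totalDegree ≤ 3) :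
    p.totalDegree ≤ 2 := by
  by_cases hp : p = 0
  · simp [hp]
  · rw [totalDegree_mul_of_isDomain (X_ne_zero i) hp, totalDegree_X] at h
    omega

lemma pd0 (a : ℝ) : pderiv 0 (torusF a) = C 4 * X 0 * (X 0 ^ 2 + X 1 ^ 2 - C (a ^ 2)) := by
  simp [torusF, pderiv_X, -map_pow]
  rw [show (C 4 : MvPolynomial (Fin 3) ℝ) = 4 from rfl]
  ring

lemma pd1 (a : ℝ) : pderiv 1 (torusF a) = C 4 * X 1 * (X 0 ^ 2 + X 1 ^ 2 - C (a ^ 2)) := by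
  simp [torusF, pderiv_X, -map_pow]
  rw [show (C 4 : MvPolynomial (Fin 3) ℝ) = 4 from rfl]
  ring

lemma pd2 (a : ℝ) : pderiv 2 (torusF a) = C 2 * X 2 := by
  simp [torusF, pderiv_X, -map_pow]
  rfl

lemma degS (a : ℝ) :
    (X 0 ^ 2 + X 1 ^ 2 - C (a ^ 2) : MvPolynomial (Fin 3) ℝ).totalDegree ≤ 2 := by
  refine (totalDegree_sub _ _).trans (max_le ((totalDegree_add _ _).trans (max_le ?_ ?_)) ?_)
  · simp
  · simp
  · rw [totalDegree_C]; omega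

lemma degCX (i : Fin 3) (c : ℝ) : (C c * X i : MvPolynomial (Fin 3) ℝ).totalDegree ≤ 1 := by
  refine (totalDegree_mul _ _).trans ?_
  simp

lemma degF (a : ℝ) : 4 ≤ (torusF a).totalDegree := by
  have h := aeval_natDegree_le (torusF a) le_rfl
    (![Polynomial.X, 0, 0] : Fin 3 → Polynomial ℝ) (n := 1) (by
      intro i; fin_cases i <;> simp)
  have e : aeval (![Polynomial.X, 0, 0] : Fin 3 → Polynomial ℝ) (torusF a)
      = (Polynomial.X ^ 2 - Polynomial.C (a ^ 2)) ^ 2 - 1 := by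
    simp [torusF]
  rw [e] at h
  have e2 : ((Polynomial.X ^ 2 - Polynomial.C (a ^ 2)) ^ 2 - 1 : Polynomial ℝ).natDegree = 4 := by
    compute_degree!
  omega

lemma degK (a : ℝ) (P Q R K : MvPolynomial (Fin 3) ℝ)
    (hP : P.totalDegree ≤ 3) (hQ : Q.totalDegree ≤ 3) (hR : R.totalDegree ≤ 3)
    (h : vf P Q R (torusF a) = K * torusF a) : K.totalDegree ≤ 2 := by
  by_cases hK : K = 0
  · simp [hK]
  have hF := degF a
  have hF0 : torusF a ≠ 0 := by
    intro h0; rw [h0] at hF; simp at hF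
  have h1 : (vf P Q R (torusF a)).totalDegree ≤ 6 := by
    unfold vf
    rw [pd0, pd1, pd2]
    have hS := degS a
    have d0 := degCX 0 4
    have d1 := degCX 1 4
    have d2 := degCX 2 2
    refine (totalDegree_add _ _).trans (max_le ((totalDegree_add _ _).trans (max_le ?_ ?_)) ?_)
    · refine (totalDegree_mul _ _).trans ?_
      have := totalDegree_mul (C 4 * X 0 : MvPolynomial (Fin 3) ℝ) (X 0 ^ 2 + X 1 ^ 2 - C (a ^ 2))
      omega
    · refine (totalDegree_mul _ _).trans ?_
      have := totalDegree_mul (C 4 * X 1 : MvPolynomial (Fin 3) ℝ) (X 0 ^ 2 + X 1 ^ 2 - C (a ^ 2))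
      omega
    · refine (totalDegree_mul _ _).trans ?_
      omega
  rw [h, totalDegree_mul_of_isDomain hK hF0] at h1
  omega

lemma coeffs_zero (c0 c1 c2 c3 c4 c5 c6 : ℝ)
    (h : ∀ t : ℝ, c0 + c1 * t + c2 * t ^ 2 + c3 * t ^ 3 + c4 * t ^ 4 + c5 * t ^ 5 + c6 * t ^ 6 = 0) :
    c0 = 0 ∧ c1 = 0 ∧ c2 = 0 ∧ c3 = 0 ∧ c4 = 0 ∧ c5 = 0 ∧ c6 = 0 := by
  have h0 := h 0
  have h1 := h 1
  have h2 := h (-1)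
  have h3 := h 2
  have h4 := h (-2)
  have h5 := h 3
  have h6 := h (-3)
  norm_num at h0 h1 h2 h3 h4 h5 h6
  refine ⟨?_, ?_, ?_, ?_, ?_, ?_, ?_⟩ <;> linarith

lemma planar (A : ℝ) (hA : 1 < A) (p0 p1 p2 p4 p5 p6 q0 q1 q2 q4 q5 q6 k0 k1 k2 k4 k5 k6 : ℝ)
    (h : ∀ x y : ℝ, 4*(x^2+y^2-A)*(x^2*(p0 + p1*x + p2*y + p4*x^2 + p5*(x*y) + p6*y^2)
      + y^2*(q0 + q1*x + q2*y + q4*x^2 + q5*(x*y) + q6*y^2))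
      = (k0 + k1*x + k2*y + k4*x^2 + k5*(x*y) + k6*y^2)*((x^2+y^2-A)^2-1)) :
    p0 = 0 ∧ p1 = 0 ∧ p2 = 0 ∧ p4 = 0 ∧ p5 = 0 ∧ q0 = 0 ∧ q1 = 0 ∧ q2 = 0 ∧ q5 = 0 ∧ q6 = 0 ∧ q4 = -p6
      ∧ k0 = 0 ∧ k1 = 0 ∧ k2 = 0 ∧ k4 = 0 ∧ k5 = 0 ∧ k6 = 0 := by
  have hy : ∀ x : ℝ, _ := fun x => coeffs_zero
    (((1)*k0 + (-1)*A^2*k0)*x^0 + ((1)*k1 + (-1)*A^2*k1)*x^1 + ((1)*k4 + (2)*A^1*k0 + (-4)*A^1*p0 + (-1)*A^2*k4)*x^2 + ((2)*A^1*k1 + (-4)*A^1*p1)*x^3 + ((-1)*k0 + (4)*p0 + (2)*A^1*k4 + (-4)*A^1*p4)*x^4 + ((-1)*k1 + (4)*p1)*x^5 + ((-1)*k4 + (4)*p4)*x^6)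
    (((1)*k2 + (-1)*A^2*k2)*x^0 + ((1)*k5 + (-1)*A^2*k5)*x^1 + ((2)*A^1*k2 + (-4)*A^1*p2)*x^2 + ((2)*A^1*k5 + (-4)*A^1*p5)*x^3 + ((-1)*k2 + (4)*p2)*x^4 + ((-1)*k5 + (4)*p5)*x^5)
    (((1)*k6 + (2)*A^1*k0 + (-4)*A^1*q0 + (-1)*A^2*k6)*x^0 + ((2)*A^1*k1 + (-4)*A^1*q1)*x^1 + ((-2)*k0 + (4)*p0 + (4)*q0 + (2)*A^1*k4 + (2)*A^1*k6 + (-4)*A^1*p6 + (-4)*A^1*q4)*x^2 + ((-2)*k1 + (4)*p1 + (4)*q1)*x^3 + ((-2)*k4 + (-1)*k6 + (4)*p4 + (4)*p6 + (4)*q4)*x^4)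
    (((2)*A^1*k2 + (-4)*A^1*q2)*x^0 + ((2)*A^1*k5 + (-4)*A^1*q5)*x^1 + ((-2)*k2 + (4)*p2 + (4)*q2)*x^2 + ((-2)*k5 + (4)*p5 + (4)*q5)*x^3)
    (((-1)*k0 + (4)*q0 + (2)*A^1*k6 + (-4)*A^1*q6)*x^0 + ((-1)*k1 + (4)*q1)*x^1 + ((-1)*k4 + (-2)*k6 + (4)*p6 + (4)*q4 + (4)*q6)*x^2)
    (((-1)*k2 + (4)*q2)*x^0 + ((-1)*k5 + (4)*q5)*x^1)
    (((-1)*k6 + (4)*q6)*x^0)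
    (fun y => by linear_combination h x y)
  obtain ⟨e00, e10, e20, e30, e40, e50, e60⟩ := coeffs_zero
    ((1)*k0 + (-1)*A^2*k0)
    ((1)*k1 + (-1)*A^2*k1)
    ((1)*k4 + (2)*A^1*k0 + (-4)*A^1*p0 + (-1)*A^2*k4)
    ((2)*A^1*k1 + (-4)*A^1*p1)
    ((-1)*k0 + (4)*p0 + (2)*A^1*k4 + (-4)*A^1*p4)
    ((-1)*k1 + (4)*p1)
    ((-1)*k4 + (4)*p4)
    (fun x => by linear_combination (hy x).1)
  obtain ⟨e01, e11, e21, e31, e41, e51, e61⟩ := coeffs_zero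
    ((1)*k2 + (-1)*A^2*k2)
    ((1)*k5 + (-1)*A^2*k5)
    ((2)*A^1*k2 + (-4)*A^1*p2)
    ((2)*A^1*k5 + (-4)*A^1*p5)
    ((-1)*k2 + (4)*p2)
    ((-1)*k5 + (4)*p5)
    0
    (fun x => by linear_combination (hy x).2.1)
  obtain ⟨e02, e12, e22, e32, e42, e52, e62⟩ := coeffs_zero
    ((1)*k6 + (2)*A^1*k0 + (-4)*A^1*q0 + (-1)*A^2*k6)
    ((2)*A^1*k1 + (-4)*A^1*q1)
    ((-2)*k0 + (4)*p0 + (4)*q0 + (2)*A^1*k4 + (2)*A^1*k6 + (-4)*A^1*p6 + (-4)*A^1*q4)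
    ((-2)*k1 + (4)*p1 + (4)*q1)
    ((-2)*k4 + (-1)*k6 + (4)*p4 + (4)*p6 + (4)*q4)
    0
    0
    (fun x => by linear_combination (hy x).2.2.1)
  obtain ⟨e03, e13, e23, e33, e43, e53, e63⟩ := coeffs_zero
    ((2)*A^1*k2 + (-4)*A^1*q2)
    ((2)*A^1*k5 + (-4)*A^1*q5)
    ((-2)*k2 + (4)*p2 + (4)*q2)
    ((-2)*k5 + (4)*p5 + (4)*q5)
    0
    0
    0
    (fun x => by linear_combination (hy x).2.2.2.1)
  obtain ⟨e04, e14, e24, e34, e44, e54, e64⟩ := coeffs_zero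
    ((-1)*k0 + (4)*q0 + (2)*A^1*k6 + (-4)*A^1*q6)
    ((-1)*k1 + (4)*q1)
    ((-1)*k4 + (-2)*k6 + (4)*p6 + (4)*q4 + (4)*q6)
    0
    0
    0
    0
    (fun x => by linear_combination (hy x).2.2.2.2.1)
  obtain ⟨e05, e15, e25, e35, e45, e55, e65⟩ := coeffs_zero
    ((-1)*k2 + (4)*q2)
    ((-1)*k5 + (4)*q5)
    0
    0
    0
    0
    0
    (fun x => by linear_combination (hy x).2.2.2.2.2.1)
  obtain ⟨e06, e16, e26, e36, e46, e56, e66⟩ := coeffs_zero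
    ((-1)*k6 + (4)*q6)
    0
    0
    0
    0
    0
    0
    (fun x => by linear_combination (hy x).2.2.2.2.2.2)
  clear e16
  clear e25
  clear e26
  clear e34
  clear e35
  clear e36
  clear e43
  clear e44
  clear e45
  clear e46
  clear e52
  clear e53
  clear e54
  clear e55
  clear e56
  clear e61
  clear e62
  clear e63
  clear e64
  clear e65
  clear e66
  have hA2 : (1 - A ^ 2) ≠ 0 := by nlinarith
  have k0z : k0 = 0 := by
    have : (1 - A ^ 2) * k0 = 0 := by linear_combination e00
    exact (mul_eq_zero.mp this).resolve_left hA2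
  have k1z : k1 = 0 := by
    have : (1 - A ^ 2) * k1 = 0 := by linear_combination e10
    exact (mul_eq_zero.mp this).resolve_left hA2
  have k2z : k2 = 0 := by
    have : (1 - A ^ 2) * k2 = 0 := by linear_combination e01
    exact (mul_eq_zero.mp this).resolve_left hA2
  have k5z : k5 = 0 := by
    have : (1 - A ^ 2) * k5 = 0 := by linear_combination e11
    exact (mul_eq_zero.mp this).resolve_left hA2
  subst k0z k1z k2z k5z
  have k4z : k4 = 0 := by linear_combination e20 + A * e40 + A ^ 2 * e60
  have k6z : k6 = 0 := by linear_combination e02 + A * e04 + A ^ 2 * e06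
  subst k4z k6z
  refine ⟨?_, ?_, ?_, ?_, ?_, ?_, ?_, ?_, ?_, ?_, ?_, rfl, rfl, rfl, rfl, rfl, rfl⟩
  · linear_combination (e40 + A * e60) / 4
  · linear_combination e50 / 4
  · linear_combination e41 / 4
  · linear_combination e60 / 4
  · linear_combination e51 / 4
  · linear_combination (e04 + A * e06) / 4
  · linear_combination e14 / 4
  · linear_combination e05 / 4
  · linear_combination e15 / 4
  · linear_combination e06 / 4
  · linear_combination (e42 - e60) / 4

lemma core (A : ℝ) (hA : 1 < A) (p q r k : Fin 10 → ℝ)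
    (h : ∀ x y z : ℝ, 4 * (x ^ 2 + y ^ 2 - A) * (x ^ 2 * quad p x y z + y ^ 2 * quad q x y z)
      + 2 * z ^ 2 * quad r x y z = quad k x y z * ((x ^ 2 + y ^ 2 - A) ^ 2 + z ^ 2 - 1)) :
    ∃ c₁ c₂ : ℝ, ∀ x y z : ℝ, quad p x y z = c₂ / 4 * z ^ 2 + c₁ * y ^ 2 ∧
      quad q x y z = c₂ / 4 * z ^ 2 - c₁ * x ^ 2 ∧
      quad r x y z = c₂ / 2 * (- A * (x ^ 2 + y ^ 2) + z ^ 2 + (A ^ 2 - 1)) := by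
  simp only [quad] at h ⊢
  have hz : ∀ x y : ℝ, _ := fun x y => coeffs_zero
    (4 * (x ^ 2 + y ^ 2 - A) *
      (x ^ 2 * (p 0 + p 1 * x + p 2 * y + p 4 * x ^ 2 + p 5 * (x * y) + p 6 * y ^ 2)
      + y ^ 2 * (q 0 + q 1 * x + q 2 * y + q 4 * x ^ 2 + q 5 * (x * y) + q 6 * y ^ 2))
      - (k 0 + k 1 * x + k 2 * y + k 4 * x ^ 2 + k 5 * (x * y) + k 6 * y ^ 2)
        * ((x ^ 2 + y ^ 2 - A) ^ 2 - 1))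
    (4 * (x ^ 2 + y ^ 2 - A) *
      (x ^ 2 * (p 3 + p 7 * x + p 8 * y) + y ^ 2 * (q 3 + q 7 * x + q 8 * y))
      - (k 3 + k 7 * x + k 8 * y) * ((x ^ 2 + y ^ 2 - A) ^ 2 - 1))
    (4 * (x ^ 2 + y ^ 2 - A) * (x ^ 2 * p 9 + y ^ 2 * q 9)
      + 2 * (r 0 + r 1 * x + r 2 * y + r 4 * x ^ 2 + r 5 * (x * y) + r 6 * y ^ 2)
      - k 9 * ((x ^ 2 + y ^ 2 - A) ^ 2 - 1)
      - (k 0 + k 1 * x + k 2 * y + k 4 * x ^ 2 + k 5 * (x * y) + k 6 * y ^ 2))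
    (2 * (r 3 + r 7 * x + r 8 * y) - (k 3 + k 7 * x + k 8 * y))
    (2 * r 9 - k 9) 0 0
    (fun z => by linear_combination h x y z)
  obtain ⟨p0, p1, p2, p4, p5, q0, q1, q2, q5, q6, q4, k0, k1, k2, k4, k5, k6⟩ :=
    planar A hA (p 0) (p 1) (p 2) (p 4) (p 5) (p 6) (q 0) (q 1) (q 2) (q 4) (q 5) (q 6)
      (k 0) (k 1) (k 2) (k 4) (k 5) (k 6) (fun x y => by linear_combination (hz x y).1)
  obtain ⟨p3, p7, p8, -, -, q3, q7, q8, -, -, -, k3, k7, k8, -, -, -⟩ :=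
    planar A hA (p 3) (p 7) (p 8) 0 0 0 (q 3) (q 7) (q 8) 0 0 0
      (k 3) (k 7) (k 8) 0 0 0 (fun x y => by linear_combination (hz x y).2.1)
  have h2 := fun x y => (hz x y).2.2.1
  have h3 := fun x y => (hz x y).2.2.2.1
  have h4 := (hz 0 0).2.2.2.2.1
  simp only [k0, k1, k2, k4, k5, k6, k3, k7, k8] at h2 h3
  have hp9 : p 9 = k 9 / 4 := by
    have := (coeffs_zero (-4 * A * 0 + 2 * r 0 - k 9 * (A ^ 2 - 1)) (2 * r 1)
      (-4 * A * p 9 + 2 * r 4 + 2 * A * k 9) 0 (4 * p 9 - k 9) 0 0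
      (fun x => by linear_combination h2 x 0)).2.2.2.2.1
    linear_combination this / 4
  have hq9 : q 9 = k 9 / 4 := by
    have := (coeffs_zero (-4 * A * 0 + 2 * r 0 - k 9 * (A ^ 2 - 1)) (2 * r 2)
      (-4 * A * q 9 + 2 * r 6 + 2 * A * k 9) 0 (4 * q 9 - k 9) 0 0
      (fun x => by linear_combination h2 0 x)).2.2.2.2.1
    linear_combination this / 4
  refine ⟨p 6, k 9, fun x y z => ⟨?_, ?_, ?_⟩⟩
  · simp only [p0, p1, p2, p3, p4, p5, p7, p8, hp9]; ring
  · simp only [q0, q1, q2, q3, q4, q5, q6, q7, q8, hq9]; ring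
  · have e2 := h2 x y
    rw [hp9, hq9] at e2
    linear_combination e2 / 2 + h3 x y * z / 2 + h4 * z ^ 2 / 2

theorem stmt_9 (a : ℝ) (ha : 1 < a) (P Q R : MvPolynomial (Fin 3) ℝ)
    (hP : P.totalDegree ≤ 3) (hQ : Q.totalDegree ≤ 3) (hR : R.totalDegree ≤ 3)
    (hx : X 0 ∣ P) (hy : X 1 ∣ Q) (hz : X 2 ∣ R) :
    (IsVFOnTorus a P Q R ↔
      ∃ c₁ c₂ : ℝ,
        P = C (1/4 : ℝ) * C c₂ * X 2 ^ 2 * X 0 + C c₁ * X 0 * X 1 ^ 2 ∧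
        Q = C (1/4 : ℝ) * C c₂ * X 2 ^ 2 * X 1 - C c₁ * X 0 ^ 2 * X 1 ∧
        R = C (c₂ / 2) * X 2 *
          (- C (a ^ 2) * (X 0 ^ 2 + X 1 ^ 2) + X 2 ^ 2 + C (a ^ 4 - 1))) ∧
    (∀ c₁ c₂ : ℝ,
        P = C (1/4 : ℝ) * C c₂ * X 2 ^ 2 * X 0 + C c₁ * X 0 * X 1 ^ 2 →
        Q = C (1/4 : ℝ) * C c₂ * X 2 ^ 2 * X 1 - C c₁ * X 0 ^ 2 * X 1 →
        R = C (c₂ / 2) * X 2 *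
          (- C (a ^ 2) * (X 0 ^ 2 + X 1 ^ 2) + X 2 ^ 2 + C (a ^ 4 - 1)) →
        vf P Q R (torusF a) = (C c₂ * X 2 ^ 2) * torusF a) := by
  have hmore : ∀ c₁ c₂ : ℝ,
        P = C (1/4 : ℝ) * C c₂ * X 2 ^ 2 * X 0 + C c₁ * X 0 * X 1 ^ 2 →
        Q = C (1/4 : ℝ) * C c₂ * X 2 ^ 2 * X 1 - C c₁ * X 0 ^ 2 * X 1 →
        R = C (c₂ / 2) * X 2 *
          (- C (a ^ 2) * (X 0 ^ 2 + X 1 ^ 2) + X 2 ^ 2 + C (a ^ 4 - 1)) →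
        vf P Q R (torusF a) = (C c₂ * X 2 ^ 2) * torusF a := by
    intro c₁ c₂ h1 h2 h3
    apply MvPolynomial.funext
    intro v
    unfold vf
    rw [pd0, pd1, pd2, h1, h2, h3]
    simp only [torusF, map_add, map_mul, map_sub, map_pow, map_neg, map_one, eval_C, eval_X]
    ring
  refine ⟨⟨?_, ?_⟩, hmore⟩
  · rintro ⟨K, hK⟩
    have hKd := degK a P Q R K hP hQ hR hK
    obtain ⟨p, rfl⟩ := hx
    obtain ⟨q, rfl⟩ := hy
    obtain ⟨r, rfl⟩ := hz
    obtain ⟨cp, hcp⟩ := exists_quad p (quot_deg _ _ hP)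
    obtain ⟨cq, hcq⟩ := exists_quad q (quot_deg _ _ hQ)
    obtain ⟨cr, hcr⟩ := exists_quad r (quot_deg _ _ hR)
    obtain ⟨ck, hck⟩ := exists_quad K hKd
    obtain ⟨c₁, c₂, hc⟩ := core (a ^ 2) (by nlinarith) cp cq cr ck (by
      intro x y z
      have := congrArg (eval ![x, y, z]) hK
      unfold vf at this
      rw [pd0, pd1, pd2] at this
      simp only [torusF, map_add, map_mul, map_sub, map_pow, map_one, eval_C, eval_X,
        hcp, hcq, hcr, hck] at this
      simp only [Matrix.cons_val] at this
      linear_combination this)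
    have hv : ∀ v : Fin 3 → ℝ, v = ![v 0, v 1, v 2] := by
      intro v; ext i; fin_cases i <;> rfl
    refine ⟨c₁, c₂, ?_, ?_, ?_⟩
    · apply MvPolynomial.funext
      intro v
      have e : eval v p = quad cp (v 0) (v 1) (v 2) := by rw [← hcp, ← hv]
      simp only [map_add, map_mul, map_pow, eval_C, eval_X, e, (hc _ _ _).1]
      ring
    · apply MvPolynomial.funext
      intro v
      have e : eval v q = quad cq (v 0) (v 1) (v 2) := by rw [← hcq, ← hv]
      simp only [map_sub, map_mul, map_pow, eval_C, eval_X, e, (hc _ _ _).2.1]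
      ring
    · apply MvPolynomial.funext
      intro v
      have e : eval v r = quad cr (v 0) (v 1) (v 2) := by rw [← hcr, ← hv]
      simp only [map_add, map_sub, map_neg, map_one, map_mul, map_pow, eval_C, eval_X, e,
        (hc _ _ _).2.2]
      ring
  · rintro ⟨c₁, c₂, h1, h2, h3⟩
    exact ⟨_, hmore c₁ c₂ h1 h2 h3⟩
end
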